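/- arXiv:1104.4820 — 6 statements merged into one kernel-verified Lean document; each statement's English description precedes it below -/
import Mathlib

section
/- Let F ⊂ ℤ be a finite set and for each k ∈ F let P_k be a finite linear combination of operators T_{n,m} with m − n = k. Then for every j ∈ F one has ‖P_j‖ ≤ ‖Σ_{k∈F} P_k‖ (operator norms in B(H)). -/
/-- `T_{n,m} = Tⁿ (T*)ᵐ` for a bounded operator `T` on a complex Hilbert space. -/
noncomputable def Tnm {H : Type*} [NormedAddCommGroup H] [InnerProductSpace ℂ H]
    [CompleteSpace H] (T : H →L[ℂ] H) (n m : ℕ) : H →L[ℂ] H :=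
  T ^ n * (ContinuousLinearMap.adjoint T) ^ m

open scoped InnerProductSpace

section Shift

variable {H : Type*} [NormedAddCommGroup H] [InnerProductSpace ℂ H]

/-- Parseval's identity for a Hilbert basis. -/
theorem HilbertBasis.hasSum_norm_inner_sq {ι : Type*} (e : HilbertBasis ι ℂ H) (x : H) :
    HasSum (fun i => ‖⟪e i, x⟫_ℂ‖ ^ 2) (‖x‖ ^ 2) := by
  have h := e.hasSum_inner_mul_inner x x
  rw [inner_self_eq_norm_sq_to_K] at h
  have h' : ∀ i, ⟪x, e i⟫_ℂ * ⟪e i, x⟫_ℂ = ((‖⟪e i, x⟫_ℂ‖ ^ 2 : ℝ) : ℂ) := fun i => by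
    rw [← inner_conj_symm, RCLike.conj_mul]
    norm_cast
  simp only [h'] at h
  refine Complex.hasSum_ofReal.mp ?_
  rw [Complex.ofReal_pow]
  exact h

/-- An operator whose matrix is supported on the `j`-th diagonal with entries bounded by `C` has
norm at most `C`. -/
theorem opNorm_le_of_diagonal (e : HilbertBasis ℕ ℂ H) (A : H →L[ℂ] H) (j : ℤ) {C : ℝ}
    (hC : 0 ≤ C) (hA : ∀ a b : ℕ, (b : ℤ) - a ≠ j → ⟪e a, A (e b)⟫_ℂ = 0)
    (hAC : ∀ a b : ℕ, ‖⟪e a, A (e b)⟫_ℂ‖ ≤ C) : ‖A‖ ≤ C := by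
  refine A.opNorm_le_bound hC fun x => ?_
  have hx (a : ℕ) : HasSum (fun b => ⟪e b, x⟫_ℂ * ⟪e a, A (e b)⟫_ℂ) ⟪e a, A x⟫_ℂ := by
    have h := (e.hasSum_repr x).mapL (innerSL ℂ (e a) ∘L A)
    simpa [e.repr_apply_apply, inner_smul_right] using h
  have hzero (a : ℕ) (ha : (a : ℤ) + j < 0) : ⟪e a, A x⟫_ℂ = 0 := by
    refine (hx a).unique ?_
    convert hasSum_zero with b
    rw [hA a b (by omega), mul_zero]
  have hle (a : ℕ) (ha : 0 ≤ (a : ℤ) + j) :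
      ‖⟪e a, A x⟫_ℂ‖ ^ 2 ≤ C ^ 2 * ‖⟪e ((a : ℤ) + j).toNat, x⟫_ℂ‖ ^ 2 := by
    have h := (hx a).unique (hasSum_single ((a : ℤ) + j).toNat fun b hb => by
      rw [hA a b (by omega), mul_zero])
    rw [h, norm_mul, mul_pow, mul_comm]
    gcongr
    exact hAC _ _
  refine le_of_pow_le_pow_left₀ two_ne_zero (by positivity) ?_
  rw [mul_pow]
  refine hasSum_le_of_sum_le (e.hasSum_norm_inner_sq (A x)) fun s => ?_
  calc ∑ a ∈ s, ‖⟪e a, A x⟫_ℂ‖ ^ 2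
      = ∑ a ∈ s with 0 ≤ ((a : ℕ) : ℤ) + j, ‖⟪e a, A x⟫_ℂ‖ ^ 2 := by
        refine (Finset.sum_filter_of_ne fun a _ ha => ?_).symm
        contrapose! ha
        simp [hzero a ha]
    _ ≤ ∑ a ∈ s with 0 ≤ ((a : ℕ) : ℤ) + j, C ^ 2 * ‖⟪e ((a : ℤ) + j).toNat, x⟫_ℂ‖ ^ 2 :=
        Finset.sum_le_sum fun a ha => hle a (Finset.mem_filter.mp ha).2
    _ = C ^ 2 * ∑ b ∈ (s.filter fun a : ℕ => 0 ≤ (a : ℤ) + j).image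
          (fun a : ℕ => ((a : ℤ) + j).toNat), ‖⟪e b, x⟫_ℂ‖ ^ 2 := by
        rw [Finset.sum_image, Finset.mul_sum]
        intro a ha b hb hab
        simp only [Finset.coe_filter, Set.mem_ofPred_eq] at ha hb hab
        omega
    _ ≤ C ^ 2 * ‖x‖ ^ 2 := by
        gcongr
        exact e.orthonormal.sum_inner_products_le x

variable {e : HilbertBasis ℕ ℂ H} {T : H →L[ℂ] H}

theorem shift_pow_apply (hT : ∀ n : ℕ, T (e n) = e (n + 1)) (n b : ℕ) :
    (T ^ n) (e b) = e (b + n) := by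
  induction n with
  | zero => simp
  | succ n ih => rw [pow_succ', mul_apply_eq_comp, ih, hT, add_assoc]

variable [CompleteSpace H]

theorem adjoint_shift_pow_apply (hT : ∀ n : ℕ, T (e n) = e (n + 1)) (m b : ℕ) :
    (ContinuousLinearMap.adjoint T ^ m) (e b) = if m ≤ b then e (b - m) else 0 := by
  apply e.repr.injective
  ext a
  rw [e.repr_apply_apply, e.repr_apply_apply, ← ContinuousLinearMap.star_eq_adjoint, ← star_pow,
    ContinuousLinearMap.star_eq_adjoint, ContinuousLinearMap.adjoint_inner_right,
    shift_pow_apply hT, orthonormal_iff_ite.mp e.orthonormal]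
  split_ifs with h₁ h₂ h₂
  · rw [orthonormal_iff_ite.mp e.orthonormal, if_pos (by omega)]
  · omega
  · rw [orthonormal_iff_ite.mp e.orthonormal, if_neg (by omega)]
  · rw [inner_zero_right]

/-- The matrix of `T_{n,m}` is supported on the `(m - n)`-th diagonal. -/
theorem inner_Tnm_eq_zero (hT : ∀ n : ℕ, T (e n) = e (n + 1)) {n m a b : ℕ}
    (h : (b : ℤ) - a ≠ m - n) : ⟪e a, Tnm T n m (e b)⟫_ℂ = 0 := by
  rw [Tnm, mul_apply_eq_comp, adjoint_shift_pow_apply hT]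
  split_ifs with hm
  · rw [shift_pow_apply hT, orthonormal_iff_ite.mp e.orthonormal, if_neg (by omega)]
  · rw [map_zero, inner_zero_right]

theorem inner_eq_zero_of_mem_span_Tnm (hT : ∀ n : ℕ, T (e n) = e (n + 1)) {k : ℤ}
    {A : H →L[ℂ] H} (hA : A ∈ Submodule.span ℂ
      {A : H →L[ℂ] H | ∃ n m : ℕ, (m : ℤ) - (n : ℤ) = k ∧ A = Tnm T n m})
    {a b : ℕ} (h : (b : ℤ) - a ≠ k) : ⟪e a, A (e b)⟫_ℂ = 0 := by
  induction hA using Submodule.span_induction with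
  | mem A hA =>
    obtain ⟨n, m, rfl, rfl⟩ := hA
    exact inner_Tnm_eq_zero hT h
  | zero => simp
  | add A B _ _ hA hB => simp [hA, hB]
  | smul c A _ hA => simp [hA]

end Shift

/-- if `P_k` is a finite linear combination of the `T_{n,m}` with `m - n = k`,
for each `k` in a finite set `F ⊂ ℤ`, then `‖P_j‖ ≤ ‖∑_{k ∈ F} P_k‖` for every `j ∈ F`. -/
theorem norm_component_le_norm_sum {H : Type*} [NormedAddCommGroup H]
    [InnerProductSpace ℂ H] [CompleteSpace H] (e : HilbertBasis ℕ ℂ H) (T : H →L[ℂ] H)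
    (hT : ∀ n : ℕ, T (e n) = e (n + 1))
    (F : Finset ℤ) (P : ℤ → H →L[ℂ] H)
    (hP : ∀ k ∈ F, P k ∈ Submodule.span ℂ
      {A : H →L[ℂ] H | ∃ n m : ℕ, (m : ℤ) - (n : ℤ) = k ∧ A = Tnm T n m}) :
    ∀ j ∈ F, ‖P j‖ ≤ ‖∑ k ∈ F, P k‖ := by
  intro j hj
  refine opNorm_le_of_diagonal e (P j) j (norm_nonneg _)
    (fun a b h => inner_eq_zero_of_mem_span_Tnm hT (hP j hj) h) fun a b => ?_
  by_cases h : (b : ℤ) - a = j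
  · have hsum : ⟪e a, (∑ k ∈ F, P k) (e b)⟫_ℂ = ⟪e a, P j (e b)⟫_ℂ := by
      rw [sum_apply, inner_sum]
      exact Finset.sum_eq_single_of_mem j hj fun k hk hkj =>
        inner_eq_zero_of_mem_span_Tnm hT (hP k hk) (h.trans_ne hkj.symm)
    rw [← hsum]
    calc _ ≤ ‖e a‖ * ‖(∑ k ∈ F, P k) (e b)‖ := norm_inner_le_norm _ _
      _ ≤ ‖e a‖ * (‖∑ k ∈ F, P k‖ * ‖e b‖) := by
        gcongr
        exact ContinuousLinearMap.le_opNorm _ _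
      _ = ‖∑ k ∈ F, P k‖ := by
        rw [e.orthonormal.1, e.orthonormal.1, one_mul, mul_one]
  · rw [inner_eq_zero_of_mem_span_Tnm hT (hP j hj) h, norm_zero]
    exact norm_nonneg _
end

section
/- If A ∈ 𝒯 and A_k = 0 for every k ∈ ℤ, then A = 0. -/
/-- The Toeplitz algebra: the norm-closed star-subalgebra of `B(H)` generated by `T`. -/
noncomputable def ToeplitzAlg {H : Type*} [NormedAddCommGroup H] [InnerProductSpace ℂ H]
    [CompleteSpace H] (T : H →L[ℂ] H) : StarSubalgebra ℂ (H →L[ℂ] H) :=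
  StarAlgebra.elemental ℂ T

/-- The `k`-th Fourier coefficient `A_k = (1/2π) ∫₀^{2π} e^{-ikθ} U_θ A U_θ* dθ`
(a Bochner integral in `B(H)`). -/
noncomputable def opFourierCoeff {H : Type*} [NormedAddCommGroup H] [InnerProductSpace ℂ H]
    [CompleteSpace H] (U : ℝ → H →L[ℂ] H) (A : H →L[ℂ] H) (k : ℤ) : H →L[ℂ] H :=
  (2 * Real.pi)⁻¹ • ∫ θ in (0 : ℝ)..(2 * Real.pi),
    Complex.exp (-(k : ℂ) * θ * Complex.I) • (U θ * A * ContinuousLinearMap.adjoint (U θ))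

/-- Bounded operators agreeing on a Hilbert basis are equal. -/
theorem HilbertBasis.ext_clm {ι H : Type*} [NormedAddCommGroup H] [InnerProductSpace ℂ H]
    (e : HilbertBasis ι ℂ H) {A B : H →L[ℂ] H} (h : ∀ n, A (e n) = B (e n)) : A = B := by
  refine ContinuousLinearMap.ext_on (s := Set.range e) ?_ ?_
  · exact Submodule.dense_iff_topologicalClosure_eq_top.2 e.dense_span
  · rintro _ ⟨n, rfl⟩
    exact h n

/-- A vector is determined by its inner products with a Hilbert basis. -/
theorem HilbertBasis.ext_inner {ι H : Type*} [NormedAddCommGroup H] [InnerProductSpace ℂ H]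
    (e : HilbertBasis ι ℂ H) {x y : H} (h : ∀ n, inner ℂ (e n) x = inner ℂ (e n) y) : x = y := by
  apply e.repr.injective
  ext n
  simpa only [e.repr_apply_apply] using h n

section

variable {H : Type*} [NormedAddCommGroup H] [InnerProductSpace ℂ H] [CompleteSpace H]

/-- The adjoint of a diagonal operator is diagonal with the conjugate entries. -/
theorem HilbertBasis.adjoint_apply_of_diagonal {ι : Type*} (e : HilbertBasis ι ℂ H)
    {V : H →L[ℂ] H} {c : ι → ℂ} (hV : ∀ n, V (e n) = c n • e n) (n : ι) :
    ContinuousLinearMap.adjoint V (e n) = star (c n) • e n := by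
  refine e.ext_inner fun m => ?_
  rw [ContinuousLinearMap.adjoint_inner_right, hV, inner_smul_left, inner_smul_right]
  by_cases hmn : m = n
  · simp [hmn]
  · simp [e.orthonormal.2 hmn]

/-- A diagonal operator with unimodular entries is unitary. -/
theorem HilbertBasis.mem_unitary_of_diagonal {ι : Type*} (e : HilbertBasis ι ℂ H)
    {V : H →L[ℂ] H} {c : ι → ℂ} (hV : ∀ n, V (e n) = c n • e n) (hc : ∀ n, ‖c n‖ = 1) :
    V ∈ unitary (H →L[ℂ] H) := by
  have hadj := e.adjoint_apply_of_diagonal hV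
  have hcc : ∀ n, c n * star (c n) = 1 := fun n => by
    simpa [hc n] using Complex.mul_conj' (c n)
  rw [Unitary.mem_iff, ContinuousLinearMap.star_eq_adjoint]
  constructor <;> refine e.ext_clm fun n => ?_
  · simp only [mul_apply_eq_comp, hV, map_smul, hadj, smul_smul, hcc,
      one_apply_eq_self, one_smul]
  · simp only [mul_apply_eq_comp, hV, map_smul, hadj, smul_smul,
      mul_comm (star (c n)), hcc, one_apply_eq_self, one_smul]

end

/-- If a family of unitaries acts continuously by conjugation on `T`, then it acts continuously
on the closed star subalgebra generated by `T`. -/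
theorem continuous_conj_of_mem_elemental {X 𝔄 : Type*} [TopologicalSpace X] [CStarAlgebra 𝔄]
    {V : X → 𝔄} (hV : ∀ x, V x ∈ unitary 𝔄) {T A : 𝔄}
    (hT : Continuous fun x => V x * T * star (V x)) (hA : A ∈ StarAlgebra.elemental ℂ T) :
    Continuous fun x => V x * A * star (V x) := by
  have hV' : ∀ x, star (V x) * V x = 1 := fun x => (Unitary.mem_iff.1 (hV x)).1
  have hV'' : ∀ x, V x * star (V x) = 1 := fun x => (Unitary.mem_iff.1 (hV x)).2
  have hadjoin : ∀ B ∈ StarAlgebra.adjoin ℂ {T}, Continuous fun x => V x * B * star (V x) := by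
    intro B hB
    induction hB using StarAlgebra.adjoin_induction with
    | mem B hB =>
      rw [Set.mem_singleton_iff.1 hB]
      exact hT
    | algebraMap r =>
      simp only [Algebra.algebraMap_eq_smul_one, mul_smul_comm, mul_one, smul_mul_assoc, hV'']
      exact continuous_const
    | add B C _ _ hB hC =>
      refine (hB.add hC).congr fun x => ?_
      rw [Pi.add_apply, mul_add, add_mul]
    | mul B C _ _ hB hC =>
      refine (hB.mul hC).congr fun x => ?_
      rw [Pi.mul_apply, ← mul_assoc, ← mul_assoc, mul_assoc (V x * B), hV', mul_one,
        mul_assoc (V x) B C]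
    | star B _ hB => simpa only [star_mul, star_star, mul_assoc] using hB.star
  have hA' : A ∈ closure (StarAlgebra.adjoin ℂ {T} : Set 𝔄) := hA
  refine continuous_of_uniform_approx_of_continuous fun u hu => ?_
  obtain ⟨ε, hε, hεu⟩ := Metric.mem_uniformity_dist.1 hu
  obtain ⟨B, hB, hAB⟩ := Metric.mem_closure_iff.1 hA' ε hε
  refine ⟨_, hadjoin B hB, fun x => hεu ?_⟩
  rw [dist_eq_norm, ← sub_mul, ← mul_sub,
    CStarRing.norm_mul_mem_unitary _ (Unitary.star_mem (hV x)),
    CStarRing.norm_mem_unitary_mul _ (hV x), ← dist_eq_norm]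
  exact hAB

/-- if all Fourier coefficients of `A ∈ 𝒯` vanish, then `A = 0`. -/
theorem eq_zero_of_opFourierCoeff_eq_zero {H : Type*} [NormedAddCommGroup H]
    [InnerProductSpace ℂ H] [CompleteSpace H] (e : HilbertBasis ℕ ℂ H) (T : H →L[ℂ] H)
    (hT : ∀ n : ℕ, T (e n) = e (n + 1))
    (U : ℝ → H →L[ℂ] H)
    (hU : ∀ (θ : ℝ) (n : ℕ), U θ (e n) = Complex.exp ((n : ℂ) * θ * Complex.I) • e n)
    (A : H →L[ℂ] H) (hA : A ∈ ToeplitzAlg T)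
    (h : ∀ k : ℤ, opFourierCoeff U A k = 0) : A = 0 := by
  have hstar : ∀ (θ : ℝ) (n : ℕ), star (Complex.exp ((n : ℂ) * θ * Complex.I)) =
      Complex.exp (-((n : ℂ) * θ * Complex.I)) := fun θ n => by
    simp [← Complex.exp_conj]
  have hadj : ∀ (θ : ℝ) (n : ℕ), ContinuousLinearMap.adjoint (U θ) (e n) =
      Complex.exp (-((n : ℂ) * θ * Complex.I)) • e n := fun θ n => by
    rw [e.adjoint_apply_of_diagonal (hU θ), hstar]
  have hunit : ∀ θ, U θ ∈ unitary (H →L[ℂ] H) := fun θ =>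
    e.mem_unitary_of_diagonal (hU θ) fun n => by
      exact_mod_cast Complex.norm_exp_ofReal_mul_I ((n : ℝ) * θ)
  have hUT : ∀ θ : ℝ, U θ * T * star (U θ) = Complex.exp (θ * Complex.I) • T := fun θ =>
    e.ext_clm fun n => by
      simp only [ContinuousLinearMap.star_eq_adjoint, mul_apply_eq_comp, hadj, map_smul,
        hT, hU, smul_smul, ← Complex.exp_add, smul_apply]
      congr 2
      push_cast
      ring
  have hcont : Continuous fun θ => U θ * A * star (U θ) :=
    continuous_conj_of_mem_elemental hunit (by simp only [hUT]; fun_prop) hA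
  simp only [ContinuousLinearMap.star_eq_adjoint] at hcont
  refine e.ext_clm fun n => e.ext_inner fun m => ?_
  let L : (H →L[ℂ] H) →L[ℂ] ℂ := (innerSL ℂ (e m)).comp (ContinuousLinearMap.apply ℂ H (e n))
  have hL : ∀ θ : ℝ, L (Complex.exp (-(((m : ℤ) - n : ℤ) : ℂ) * θ * Complex.I) •
      (U θ * A * ContinuousLinearMap.adjoint (U θ))) = inner ℂ (e m) (A (e n)) := fun θ => by
    simp only [L, map_smul, ContinuousLinearMap.comp_apply, ContinuousLinearMap.apply_apply,
      mul_apply_eq_comp, innerSL_apply_apply, hadj]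
    rw [← ContinuousLinearMap.adjoint_inner_left, hadj, inner_smul_left, ← hstar θ m,
      starRingEnd_apply, star_star, smul_smul, smul_eq_mul, ← mul_assoc,
      ← Complex.exp_add, ← Complex.exp_add]
    convert one_mul _
    rw [← Complex.exp_zero]
    congr 1
    push_cast
    ring
  have hint := L.intervalIntegral_comp_comm (a := 0) (b := 2 * Real.pi) (μ := MeasureTheory.volume)
    (f := fun θ : ℝ => Complex.exp (-(((m : ℤ) - n : ℤ) : ℂ) * θ * Complex.I) •
      (U θ * A * ContinuousLinearMap.adjoint (U θ)))
    (Continuous.intervalIntegrable (by fun_prop) _ _)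
  have hzero := (smul_eq_zero.1 (h ((m : ℤ) - n))).resolve_left (by positivity)
  simp only [hzero, hL] at hint
  simpa [Real.pi_ne_zero] using hint
end

section
/- Every element A ∈ 𝒯₀ is uniquely represented by an infinite series A = Σ_{n=0}^∞ β_n T_{n,n} converging in the strong operator topology, where the complex series Σ_{n=0}^∞ β_n converges; explicitly β_0 = ⟨A e_0, e_0⟩ and β_n = ⟨A e_n, e_n⟩ − ⟨A e_{n−1}, e_{n−1}⟩ for n ≥ 1. -/
open scoped ComplexInnerProductSpace

/-- The coefficients `β₀ = ⟨A e₀, e₀⟩`, `β_{n+1} = ⟨A e_{n+1}, e_{n+1}⟩ - ⟨A e_n, e_n⟩`. -/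
noncomputable def diagDiff {H : Type*} [NormedAddCommGroup H] [InnerProductSpace ℂ H]
    [CompleteSpace H] (e : HilbertBasis ℕ ℂ H) (A : H →L[ℂ] H) : ℕ → ℂ
  | 0 => ⟪e 0, A (e 0)⟫
  | n + 1 => ⟪e (n + 1), A (e (n + 1))⟫ - ⟪e n, A (e n)⟫

section ShiftDiagonal

variable {H : Type*} [NormedAddCommGroup H] [InnerProductSpace ℂ H]
  (e : HilbertBasis ℕ ℂ H) {T : H →L[ℂ] H}

theorem HilbertBasis.clm_ext {A B : H →L[ℂ] H} (h : ∀ k, A (e k) = B (e k)) : A = B := by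
  refine ContinuousLinearMap.ext_on (s := Set.range e) ?_ ?_
  · exact Submodule.dense_iff_topologicalClosure_eq_top.mpr e.dense_span
  · rintro _ ⟨k, rfl⟩
    exact h k

theorem HilbertBasis.inner_apply (i j : ℕ) : ⟪e i, e j⟫ = if i = j then (1 : ℂ) else 0 :=
  orthonormal_iff_ite.mp e.orthonormal i j

theorem HilbertBasis.ext_inner_s7 {x y : H} (h : ∀ k, ⟪e k, x⟫ = ⟪e k, y⟫) : x = y := by
  apply e.repr.injective
  ext k
  simpa only [e.repr_apply_apply] using h k

theorem norm_diag_le (A : H →L[ℂ] H) (k : ℕ) : ‖⟪e k, A (e k)⟫‖ ≤ ‖A‖ := by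
  have h1 : ‖e k‖ = 1 := e.orthonormal.1 k
  have h := norm_inner_le_norm (𝕜 := ℂ) (e k) (A (e k))
  have h2 := A.le_opNorm (e k)
  rw [h1] at h h2
  linarith

variable [CompleteSpace H]

theorem adjoint_shift_zero (hT : ∀ n : ℕ, T (e n) = e (n + 1)) :
    ContinuousLinearMap.adjoint T (e 0) = 0 := by
  refine e.ext_inner_s7 fun k => ?_
  simp [ContinuousLinearMap.adjoint_inner_right, hT, e.inner_apply]

theorem adjoint_shift_succ (hT : ∀ n : ℕ, T (e n) = e (n + 1)) (n : ℕ) :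
    ContinuousLinearMap.adjoint T (e (n + 1)) = e n := by
  refine e.ext_inner_s7 fun k => ?_
  simp [ContinuousLinearMap.adjoint_inner_right, hT, e.inner_apply]

theorem Tnm_self_succ_apply (n : ℕ) (x : H) :
    Tnm T (n + 1) (n + 1) x = T (Tnm T n n (ContinuousLinearMap.adjoint T x)) := by
  simp only [Tnm, pow_succ' T n, pow_succ _ n, mul_apply_eq_comp]

theorem Tnm_self_basis (hT : ∀ n : ℕ, T (e n) = e (n + 1)) (n k : ℕ) :
    Tnm T n n (e k) = if n ≤ k then e k else 0 := by
  induction n generalizing k with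
  | zero => simp [Tnm]
  | succ n ih =>
    rw [Tnm_self_succ_apply]
    cases k with
    | zero => simp [adjoint_shift_zero e hT]
    | succ k =>
      rw [adjoint_shift_succ e hT, ih]
      split_ifs <;> first | omega | simp [hT]

/-- `T_{n,n}` is the projection onto the closed span of `e_n, e_{n+1}, …`. -/
theorem Tnm_self_apply (hT : ∀ n : ℕ, T (e n) = e (n + 1)) (n : ℕ) (x : H) :
    Tnm T n n x = x - ∑ i ∈ Finset.range n, ⟪e i, x⟫ • e i := by
  have h : Tnm T n n = ContinuousLinearMap.id ℂ H -
      ∑ i ∈ Finset.range n, (innerSL ℂ (e i)).smulRight (e i) := by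
    refine e.clm_ext fun k => ?_
    rw [Tnm_self_basis e hT]
    by_cases hk : n ≤ k
    · simp [e.inner_apply, hk, hk.not_gt]
    · simp [e.inner_apply, hk, not_le.mp hk]
  simp [h]

theorem tendsto_Tnm_self_apply (hT : ∀ n : ℕ, T (e n) = e (n + 1)) (x : H) :
    Filter.Tendsto (fun n => Tnm T n n x) Filter.atTop (nhds 0) := by
  have h := (e.hasSum_repr x).tendsto_sum_nat
  simp only [e.repr_apply_apply] at h
  simpa [Tnm_self_apply e hT] using h.const_sub x

theorem sum_diagDiff (A : H →L[ℂ] H) (N : ℕ) :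
    ∑ n ∈ Finset.range (N + 1), diagDiff e A n = ⟪e N, A (e N)⟫ := by
  induction N with
  | zero => simp [diagDiff]
  | succ N ih => rw [Finset.sum_range_succ, ih]; simp [diagDiff]

/-- Finite combinations of the `T_{n,n}` are diagonal with eventually constant diagonal. -/
theorem diag_of_mem_span (hT : ∀ n : ℕ, T (e n) = e (n + 1)) {A : H →L[ℂ] H}
    (hA : A ∈ Submodule.span ℂ {B : H →L[ℂ] H | ∃ n : ℕ, B = Tnm T n n}) :
    (∀ k, A (e k) = ⟪e k, A (e k)⟫ • e k) ∧
      ∃ N, ∀ k, N ≤ k → ⟪e k, A (e k)⟫ = ⟪e N, A (e N)⟫ := by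
  induction hA using Submodule.span_induction with
  | mem B hB =>
    obtain ⟨n, rfl⟩ := hB
    refine ⟨fun k => ?_, n, fun k hk => ?_⟩
    · rw [Tnm_self_basis e hT]
      split_ifs <;> simp [e.orthonormal.1 k]
    · simp [Tnm_self_basis e hT, e.orthonormal.1, hk]
  | zero => simp
  | add B C _ _ hB hC =>
    obtain ⟨hB, N, hN⟩ := hB
    obtain ⟨hC, M, hM⟩ := hC
    refine ⟨fun k => ?_, max N M, fun k hk => ?_⟩
    · rw [add_apply, inner_add_right, add_smul, ← hB, ← hC]
    · simp only [add_apply, inner_add_right]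
      rw [hN k (by omega), hM k (by omega), hN (max N M) (by omega), hM (max N M) (by omega)]
  | smul c B _ hB =>
    obtain ⟨hB, N, hN⟩ := hB
    refine ⟨fun k => ?_, N, fun k hk => ?_⟩
    · rw [smul_apply, inner_smul_right, mul_smul, ← hB]
    · simp only [smul_apply, inner_smul_right, hN k hk]

theorem apply_basis_of_mem_closure (hT : ∀ n : ℕ, T (e n) = e (n + 1)) {A : H →L[ℂ] H}
    (hA : A ∈ (Submodule.span ℂ
      {B : H →L[ℂ] H | ∃ n : ℕ, B = Tnm T n n}).topologicalClosure) (k : ℕ) :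
    A (e k) = ⟪e k, A (e k)⟫ • e k := by
  have hcl : IsClosed {B : H →L[ℂ] H | B (e k) = ⟪e k, B (e k)⟫ • e k} :=
    isClosed_eq (by fun_prop) (by fun_prop)
  exact closure_minimal (fun B hB => (diag_of_mem_span e hT hB).1 k) hcl hA

theorem cauchySeq_diag_of_mem_closure (hT : ∀ n : ℕ, T (e n) = e (n + 1)) {A : H →L[ℂ] H}
    (hA : A ∈ (Submodule.span ℂ
      {B : H →L[ℂ] H | ∃ n : ℕ, B = Tnm T n n}).topologicalClosure) :
    CauchySeq fun k => ⟪e k, A (e k)⟫ := by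
  refine Metric.cauchySeq_iff'.mpr fun ε hε => ?_
  obtain ⟨B, hB, hAB⟩ := Metric.mem_closure_iff.mp hA (ε / 2) (half_pos hε)
  obtain ⟨N, hN⟩ := (diag_of_mem_span e hT hB).2
  refine ⟨N, fun k hk => ?_⟩
  have hsub : ∀ j, ⟪e j, (A - B) (e j)⟫ = ⟪e j, A (e j)⟫ - ⟪e j, B (e j)⟫ := fun j => by
    rw [sub_apply, inner_sub_right]
  have hdiff : ⟪e k, A (e k)⟫ - ⟪e N, A (e N)⟫ =
      ⟪e k, (A - B) (e k)⟫ - ⟪e N, (A - B) (e N)⟫ := by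
    rw [hsub, hsub, hN k hk]
    ring
  rw [dist_eq_norm] at hAB ⊢
  rw [hdiff]
  linarith [norm_sub_le ⟪e k, (A - B) (e k)⟫ ⟪e N, (A - B) (e N)⟫,
    norm_diag_le e (A - B) k, norm_diag_le e (A - B) N]

/-- The tail of the series of a diagonal operator. -/
theorem sum_diagDiff_smul_Tnm (hT : ∀ n : ℕ, T (e n) = e (n + 1)) {A : H →L[ℂ] H}
    (hA : ∀ k, A (e k) = ⟪e k, A (e k)⟫ • e k) (N : ℕ) :
    ∑ n ∈ Finset.range (N + 1), diagDiff e A n • Tnm T n n =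
      A - (A * Tnm T N N - ⟪e N, A (e N)⟫ • Tnm T N N) := by
  induction N with
  | zero => simp [diagDiff, Tnm]
  | succ N ih =>
    rw [Finset.sum_range_succ, ih]
    refine e.clm_ext fun k => ?_
    simp only [add_apply, sub_apply, smul_apply, mul_apply_eq_comp,
      Tnm_self_basis e hT, diagDiff]
    rcases lt_trichotomy N k with h | rfl | h
    · simp only [h.le, Nat.succ_le_of_lt h, if_true]
      module
    · simp [← hA N]
    · simp [h.not_ge, (h.trans N.lt_succ_self).not_ge]

theorem tendsto_sum_diagDiff_smul_Tnm (hT : ∀ n : ℕ, T (e n) = e (n + 1)) {A : H →L[ℂ] H}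
    (hA : ∀ k, A (e k) = ⟪e k, A (e k)⟫ • e k) {s : ℂ}
    (hs : Filter.Tendsto (fun k => ⟪e k, A (e k)⟫) Filter.atTop (nhds s)) (x : H) :
    Filter.Tendsto (fun N : ℕ => (∑ n ∈ Finset.range N, diagDiff e A n • Tnm T n n) x)
      Filter.atTop (nhds (A x)) := by
  rw [← Filter.tendsto_add_atTop_iff_nat 1]
  simp only [sum_diagDiff_smul_Tnm e hT hA]
  have hx := tendsto_Tnm_self_apply e hT x
  simpa using (((A.continuous.tendsto 0).comp hx).sub (hs.smul hx)).const_sub (A x)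

theorem sum_smul_Tnm_apply_basis (hT : ∀ n : ℕ, T (e n) = e (n + 1)) (γ : ℕ → ℂ) {k N : ℕ}
    (hN : k + 1 ≤ N) :
    (∑ n ∈ Finset.range N, γ n • Tnm T n n) (e k) =
      (∑ n ∈ Finset.range (k + 1), γ n) • e k := by
  rw [Finset.sum_smul, sum_apply]
  refine (Finset.sum_subset_zero_on_sdiff (Finset.range_mono hN) ?_ ?_).symm
  · intro n hn
    simp only [Finset.mem_sdiff, Finset.mem_range] at hn
    simp [Tnm_self_basis e hT, show ¬ n ≤ k by omega]
  · intro n hn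
    simp [Tnm_self_basis e hT, Nat.lt_succ_iff.mp (Finset.mem_range.mp hn)]

theorem eq_diagDiff_of_tendsto (hT : ∀ n : ℕ, T (e n) = e (n + 1)) {A : H →L[ℂ] H}
    {γ : ℕ → ℂ} (hγ : ∀ x : H, Filter.Tendsto
      (fun N : ℕ => (∑ n ∈ Finset.range N, γ n • Tnm T n n) x) Filter.atTop (nhds (A x))) :
    γ = diagDiff e A := by
  have hsum : ∀ k, ∑ n ∈ Finset.range (k + 1), γ n = ⟪e k, A (e k)⟫ := fun k => by
    have hAk : A (e k) = (∑ n ∈ Finset.range (k + 1), γ n) • e k :=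
      tendsto_nhds_unique (hγ (e k)) (tendsto_const_nhds.congr'
        ((Filter.eventually_ge_atTop (k + 1)).mono fun N hN =>
          (sum_smul_Tnm_apply_basis e hT γ hN).symm))
    rw [hAk, inner_smul_right, e.inner_apply, if_pos rfl, mul_one]
  funext n
  cases n with
  | zero => simpa [diagDiff] using hsum 0
  | succ n => rw [diagDiff, ← hsum, ← hsum n, Finset.sum_range_succ _ (n + 1), add_sub_cancel_left]

end ShiftDiagonal

/-- every `A ∈ 𝒯₀` is uniquely represented as `A = Σ_{n} β_n T_{n,n}` (convergence
in the strong operator topology), where `Σ β_n` converges and `β` is given by `diagDiff`. -/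
theorem T0_series_representation {H : Type*} [NormedAddCommGroup H]
    [InnerProductSpace ℂ H] [CompleteSpace H] (e : HilbertBasis ℕ ℂ H) (T : H →L[ℂ] H)
    (hT : ∀ n : ℕ, T (e n) = e (n + 1)) :
    ∀ A ∈ (Submodule.span ℂ
        {B : H →L[ℂ] H | ∃ n : ℕ, B = Tnm T n n}).topologicalClosure,
      -- the partial sums converge to `A` in the strong operator topology
      (∀ x : H, Filter.Tendsto
          (fun N : ℕ => (∑ n ∈ Finset.range N, diagDiff e A n • Tnm T n n) x)
          Filter.atTop (nhds (A x))) ∧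
      -- the complex series `Σ β_n` converges
      (∃ s : ℂ, Filter.Tendsto (fun N : ℕ => ∑ n ∈ Finset.range N, diagDiff e A n)
        Filter.atTop (nhds s)) ∧
      -- uniqueness of the representation
      (∀ γ : ℕ → ℂ, (∀ x : H, Filter.Tendsto
          (fun N : ℕ => (∑ n ∈ Finset.range N, γ n • Tnm T n n) x)
          Filter.atTop (nhds (A x))) → γ = diagDiff e A) := by
  intro A hA
  have hdiag := apply_basis_of_mem_closure e hT hA
  obtain ⟨s, hs⟩ := cauchySeq_tendsto_of_complete (cauchySeq_diag_of_mem_closure e hT hA)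
  refine ⟨tendsto_sum_diagDiff_smul_Tnm e hT hdiag hs, ⟨s, ?_⟩,
    fun γ hγ => eq_diagDiff_of_tendsto e hT hγ⟩
  rw [← Filter.tendsto_add_atTop_iff_nat 1]
  simpa only [sum_diagDiff] using hs
end

section
/- If n, m, k, l ∈ ℕ satisfy m − n = l − k (as integers), then the operator T_{n,m} − T_{k,l} is compact. -/
open ContinuousLinearMap in
/-- The adjoint of the unilateral shift annihilates the first basis vector. -/
theorem adjoint_shift_basis_zero {H : Type*} [NormedAddCommGroup H] [InnerProductSpace ℂ H]
    [CompleteSpace H] (e : HilbertBasis ℕ ℂ H) (T : H →L[ℂ] H)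
    (hT : ∀ n : ℕ, T (e n) = e (n + 1)) : adjoint T (e 0) = 0 := by
  apply e.repr.injective
  ext i
  simp [e.repr_apply_apply, adjoint_inner_right, hT, orthonormal_iff_ite.mp e.orthonormal]

open ContinuousLinearMap in
/-- The adjoint of the unilateral shift is the backward shift. -/
theorem adjoint_shift_basis_succ {H : Type*} [NormedAddCommGroup H] [InnerProductSpace ℂ H]
    [CompleteSpace H] (e : HilbertBasis ℕ ℂ H) (T : H →L[ℂ] H)
    (hT : ∀ n : ℕ, T (e n) = e (n + 1)) (n : ℕ) : adjoint T (e (n + 1)) = e n := by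
  apply e.repr.injective
  ext i
  simp only [e.repr_apply_apply, adjoint_inner_right, hT, orthonormal_iff_ite.mp e.orthonormal,
    Nat.add_right_cancel_iff]

open ContinuousLinearMap in
/-- For the unilateral shift, `1 - T T*` is the projection onto the first basis vector. -/
theorem one_sub_shift_mul_adjoint {H : Type*} [NormedAddCommGroup H] [InnerProductSpace ℂ H]
    [CompleteSpace H] (e : HilbertBasis ℕ ℂ H) (T : H →L[ℂ] H)
    (hT : ∀ n : ℕ, T (e n) = e (n + 1)) :
    1 - T * adjoint T = (innerSL ℂ (e 0)).smulRight (e 0) := by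
  refine ContinuousLinearMap.ext_on
    (Submodule.dense_iff_topologicalClosure_eq_top.mpr e.dense_span) ?_
  rintro _ ⟨i, rfl⟩
  cases i with
  | zero => simp [adjoint_shift_basis_zero e T hT, e.orthonormal.norm_eq_one]
  | succ i => simp [adjoint_shift_basis_succ e T hT, hT, orthonormal_iff_ite.mp e.orthonormal]

open ContinuousLinearMap in
/-- For the unilateral shift, `1 - T T*` is compact. -/
theorem isCompactOperator_one_sub_shift_mul_adjoint {H : Type*} [NormedAddCommGroup H]
    [InnerProductSpace ℂ H] [CompleteSpace H] (e : HilbertBasis ℕ ℂ H) (T : H →L[ℂ] H)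
    (hT : ∀ n : ℕ, T (e n) = e (n + 1)) :
    IsCompactOperator (1 - T * adjoint T : H →L[ℂ] H) := by
  rw [one_sub_shift_mul_adjoint e T hT]
  exact (isCompactOperator_of_locallyCompactSpace_dom (innerSL ℂ (e 0))).clm_comp
    (toSpanSingleton ℂ (e 0))

open ContinuousLinearMap in
/-- `T_{n,m}` and `T_{n+j,m+j}` agree modulo the compact operators. -/
theorem isCompactOperator_Tnm_sub_Tnm_add {H : Type*} [NormedAddCommGroup H]
    [InnerProductSpace ℂ H] [CompleteSpace H] (e : HilbertBasis ℕ ℂ H) (T : H →L[ℂ] H)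
    (hT : ∀ n : ℕ, T (e n) = e (n + 1)) (n m j : ℕ) :
    IsCompactOperator (Tnm T n m - Tnm T (n + j) (m + j)) := by
  induction j with
  | zero => simpa using isCompactOperator_zero
  | succ j ih =>
    have hstep : Tnm T n m - Tnm T (n + (j + 1)) (m + (j + 1)) =
        (Tnm T n m - Tnm T (n + j) (m + j)) +
          T ^ (n + j) * ((1 - T * adjoint T) * adjoint T ^ (m + j)) := by
      simp only [Tnm, ← add_assoc, pow_succ T, pow_succ' (adjoint T)]
      noncomm_ring
    rw [hstep]
    exact ih.add (((isCompactOperator_one_sub_shift_mul_adjoint e T hT).comp_clm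
      (adjoint T ^ (m + j))).clm_comp (T ^ (n + j)))

/-- if `m - n = l - k` in `ℤ`, then `T_{n,m} - T_{k,l}` is compact. -/
theorem Tnm_sub_Tkl_compact {H : Type*} [NormedAddCommGroup H]
    [InnerProductSpace ℂ H] [CompleteSpace H] (e : HilbertBasis ℕ ℂ H) (T : H →L[ℂ] H)
    (hT : ∀ n : ℕ, T (e n) = e (n + 1))
    (n m k l : ℕ) (h : (m : ℤ) - (n : ℤ) = (l : ℤ) - (k : ℤ)) :
    IsCompactOperator (⇑(Tnm T n m - Tnm T k l)) := by
  rcases le_total n k with hnk | hkn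
  · obtain ⟨j, rfl⟩ := Nat.exists_eq_add_of_le hnk
    obtain rfl : l = m + j := by omega
    exact isCompactOperator_Tnm_sub_Tnm_add e T hT n m j
  · obtain ⟨j, rfl⟩ := Nat.exists_eq_add_of_le hkn
    obtain rfl : m = l + j := by omega
    rw [← neg_sub]
    exact (isCompactOperator_Tnm_sub_Tnm_add e T hT k l j).neg
end

section
/- Let ρ be a continuous linear functional on 𝒯. Then ρ vanishes on every compact operator belonging to 𝒯 if and only if ρ(T_{n,m}) = ρ(T_{k,l}) whenever n, m, k, l ∈ ℕ satisfy m − n = l − k (as integers). -/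
open ContinuousLinearMap Filter Topology

section Shift

variable {H : Type*} [NormedAddCommGroup H] [InnerProductSpace ℂ H]

lemma HilbertBasis.continuousLinearMap_ext {ι : Type*} (e : HilbertBasis ι ℂ H) {A B : H →L[ℂ] H}
    (h : ∀ i, A (e i) = B (e i)) : A = B := by
  refine ContinuousLinearMap.ext_on (s := Set.range e) ?_ ?_
  · exact Submodule.dense_iff_topologicalClosure_eq_top.2 e.dense_span
  · rintro _ ⟨i, rfl⟩
    exact h i

lemma isCompactOperator_rankOne (x y : H) :
    IsCompactOperator (InnerProductSpace.rankOne ℂ x y) := by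
  have h := (isCompactOperator_id (E := ℂ)).comp_clm (innerSL ℂ y)
  exact h.clm_comp (toSpanSingleton ℂ x)

variable [CompleteSpace H] {e : HilbertBasis ℕ ℂ H} {T : H →L[ℂ] H}

lemma adjoint_shift_apply_succ (hT : ∀ n, T (e n) = e (n + 1)) (n : ℕ) :
    adjoint T (e (n + 1)) = e n := by
  apply e.repr.injective
  ext k
  simp [HilbertBasis.repr_apply_apply, adjoint_inner_right, hT,
    orthonormal_iff_ite.1 e.orthonormal]

lemma adjoint_shift_apply_zero (hT : ∀ n, T (e n) = e (n + 1)) : adjoint T (e 0) = 0 := by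
  apply e.repr.injective
  ext k
  simp [HilbertBasis.repr_apply_apply, adjoint_inner_right, hT,
    orthonormal_iff_ite.1 e.orthonormal]

lemma adjoint_shift_mul_shift (hT : ∀ n, T (e n) = e (n + 1)) : adjoint T * T = 1 :=
  e.continuousLinearMap_ext fun n => by simp [hT, adjoint_shift_apply_succ hT]

lemma one_sub_shift_mul_adjoint_s12 (hT : ∀ n, T (e n) = e (n + 1)) :
    1 - T * adjoint T = InnerProductSpace.rankOne ℂ (e 0) (e 0) := by
  refine e.continuousLinearMap_ext fun n => ?_
  cases n with
  | zero => simp [adjoint_shift_apply_zero hT, e.orthonormal.1]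
  | succ n => simp [adjoint_shift_apply_succ hT, hT, orthonormal_iff_ite.1 e.orthonormal]

lemma isCompactOperator_Tnm_sub_Tnm_succ (hT : ∀ n, T (e n) = e (n + 1)) (n m : ℕ) :
    IsCompactOperator (Tnm T n m - Tnm T (n + 1) (m + 1)) := by
  have h : Tnm T n m - Tnm T (n + 1) (m + 1) =
      T ^ n * InnerProductSpace.rankOne ℂ (e 0) (e 0) * adjoint T ^ m := by
    rw [← one_sub_shift_mul_adjoint_s12 hT, Tnm, Tnm, pow_succ, pow_succ']
    noncomm_ring
  rw [h]
  exact ((isCompactOperator_rankOne (e 0) (e 0)).clm_comp (T ^ n)).comp_clm (adjoint T ^ m)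

lemma norm_adjoint_apply_le_of_adjoint_mul_self (h : adjoint T * T = 1) (x : H) :
    ‖adjoint T x‖ ≤ ‖x‖ := by
  have h1 : ‖T‖ * ‖T‖ ≤ 1 := by
    rw [← CStarRing.norm_star_mul_self, star_eq_adjoint, h]
    exact norm_id_le
  have h2 : ‖adjoint T‖ ≤ 1 := by
    rw [LinearIsometryEquiv.norm_map]
    nlinarith [norm_nonneg T]
  exact (adjoint T).le_of_opNorm_le h2 x |>.trans_eq (one_mul _)

lemma antitone_norm_adjoint_pow_apply (h : adjoint T * T = 1) (x : H) :
    Antitone fun k => ‖(adjoint T ^ k) x‖ :=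
  antitone_nat_of_succ_le fun k => by
    rw [pow_succ', mul_apply_eq_comp]
    exact norm_adjoint_apply_le_of_adjoint_mul_self h _

lemma adjoint_shift_pow_apply_eq_zero (hT : ∀ n, T (e n) = e (n + 1)) (n : ℕ) :
    (adjoint T ^ (n + 1)) (e n) = 0 := by
  induction n with
  | zero => simpa using adjoint_shift_apply_zero hT
  | succ n ih => rw [pow_succ, mul_apply_eq_comp, adjoint_shift_apply_succ hT, ih]

lemma tendsto_norm_adjoint_shift_pow_apply (hT : ∀ n, T (e n) = e (n + 1)) (x : H) :
    Tendsto (fun k => ‖(adjoint T ^ k) x‖) atTop (𝓝 0) := by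
  have hanti := antitone_norm_adjoint_pow_apply (adjoint_shift_mul_shift hT)
  have hspan : ∀ y ∈ Submodule.span ℂ (Set.range e), ∃ N, ∀ k ≥ N, (adjoint T ^ k) y = 0 := by
    intro y hy
    induction hy using Submodule.span_induction with
    | mem y hy =>
      obtain ⟨n, rfl⟩ := hy
      refine ⟨n + 1, fun k hk => norm_le_zero_iff.1 ((hanti _ hk).trans_eq ?_)⟩
      simp only [adjoint_shift_pow_apply_eq_zero hT, norm_zero]
    | zero => exact ⟨0, fun k _ => map_zero _⟩
    | add y z _ _ hy hz =>
      obtain ⟨N, hN⟩ := hy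
      obtain ⟨M, hM⟩ := hz
      refine ⟨max N M, fun k hk => ?_⟩
      rw [map_add, hN k (le_of_max_le_left hk), hM k (le_of_max_le_right hk), add_zero]
    | smul c y _ hy =>
      obtain ⟨N, hN⟩ := hy
      exact ⟨N, fun k hk => by rw [map_smul, hN k hk, smul_zero]⟩
  have hdense : Dense (Submodule.span ℂ (Set.range e) : Set H) :=
    Submodule.dense_iff_topologicalClosure_eq_top.2 e.dense_span
  refine Metric.tendsto_atTop.2 fun ε hε => ?_
  obtain ⟨y, hy, hxy⟩ := hdense.exists_dist_lt x hε
  obtain ⟨N, hN⟩ := hspan y hy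
  refine ⟨N, fun k hk => ?_⟩
  have hle : ‖(adjoint T ^ k) (x - y)‖ ≤ ‖x - y‖ := by simpa using hanti (x - y) (Nat.zero_le k)
  rw [map_sub, hN k hk, sub_zero, ← dist_eq_norm x] at hle
  simpa using hle.trans_lt hxy

lemma tendsto_adjoint_shift_pow_mul_of_isCompactOperator (hT : ∀ n, T (e n) = e (n + 1))
    {a : H →L[ℂ] H} (ha : IsCompactOperator a) :
    Tendsto (fun k => adjoint T ^ k * a) atTop (𝓝 0) := by
  obtain ⟨K, hK, haK⟩ := IsCompactOperator.image_closedBall_subset_compact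
    (f := (a : H →ₗ[ℂ] H)) ha 1
  have hunif : TendstoUniformlyOn (fun k x => ‖(adjoint T ^ k) x‖) (fun _ => 0) atTop K :=
    Antitone.tendstoUniformlyOn_of_forall_tendsto hK
      (fun k => (adjoint T ^ k).continuous.norm.continuousOn)
      (fun x _ => antitone_norm_adjoint_pow_apply (adjoint_shift_mul_shift hT) x)
      continuousOn_const (fun x _ => tendsto_norm_adjoint_shift_pow_apply hT x)
  refine tendsto_zero_iff_norm_tendsto_zero.2 (Metric.tendsto_nhds.2 fun ε hε => ?_)
  filter_upwards [Metric.tendstoUniformlyOn_iff.1 hunif (ε / 2) (half_pos hε)] with k hk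
  have hle : ‖adjoint T ^ k * a‖ ≤ ε / 2 := by
    refine opNorm_le_of_unit_norm (half_pos hε).le fun x hx => ?_
    have := hk (a x) (haK ⟨x, by simp [hx], rfl⟩)
    simpa using this.le
  simpa using hle.trans_lt (half_lt_self hε)

lemma Tnm_mem_toeplitzAlg (T : H →L[ℂ] H) (n m : ℕ) : Tnm T n m ∈ ToeplitzAlg T :=
  mul_mem (pow_mem (StarAlgebra.elemental.self_mem ℂ T) n)
    (pow_mem (StarAlgebra.elemental.star_self_mem ℂ T) m)

lemma adjoint_mul_Tnm_succ (h : adjoint T * T = 1) (n m : ℕ) :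
    adjoint T * Tnm T (n + 1) m = Tnm T n m := by
  rw [Tnm, Tnm, pow_succ', ← mul_assoc, ← mul_assoc, h, one_mul]

lemma Tnm_succ_mul_self (h : adjoint T * T = 1) (n m : ℕ) :
    Tnm T n (m + 1) * T = Tnm T n m := by
  rw [Tnm, Tnm, pow_succ, mul_assoc, mul_assoc, h, mul_one]

/-- Compression by an isometry sends `T_{n,m}` to some `T_{k,l}` on the same diagonal. -/
lemma exists_adjoint_mul_Tnm_mul_self (h : adjoint T * T = 1) (n m : ℕ) :
    ∃ k l : ℕ, (l : ℤ) - k = m - n ∧ adjoint T * Tnm T n m * T = Tnm T k l := by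
  rcases n with _ | n
  · refine ⟨0, m, rfl, Eq.trans ?_ (Tnm_succ_mul_self h 0 m)⟩
    simp [Tnm, pow_succ']
  · rw [adjoint_mul_Tnm_succ h]
    rcases m with _ | m
    · exact ⟨n + 1, 0, rfl, by simp [Tnm, pow_succ]⟩
    · exact ⟨n, m, by push_cast; ring, Tnm_succ_mul_self h n m⟩

lemma adjoin_subset_span_Tnm (h : adjoint T * T = 1) {x : H →L[ℂ] H}
    (hx : x ∈ StarAlgebra.adjoin ℂ {T}) :
    x ∈ Submodule.span ℂ (Set.range fun p : ℕ × ℕ => Tnm T p.1 p.2) := by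
  set P := Submodule.span ℂ (Set.range fun p : ℕ × ℕ => Tnm T p.1 p.2)
  have hmem (n m : ℕ) : Tnm T n m ∈ P := Submodule.subset_span ⟨(n, m), rfl⟩
  have hgen {x : H →L[ℂ] H} (hx : ∀ n m, x * Tnm T n m ∈ P) : ∀ y ∈ P, x * y ∈ P := by
    have : P ≤ P.comap (LinearMap.mulLeft ℂ x) := by
      refine Submodule.span_le.2 ?_
      rintro _ ⟨p, rfl⟩
      exact hx p.1 p.2
    exact fun y hy => this hy
  have hself (n m : ℕ) : T * Tnm T n m ∈ P := by
    convert hmem (n + 1) m using 1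
    rw [Tnm, Tnm, pow_succ', mul_assoc]
  have hadj (n m : ℕ) : adjoint T * Tnm T n m ∈ P := by
    rcases n with _ | n
    · convert hmem 0 (m + 1) using 1
      simp [Tnm, pow_succ']
    · rw [adjoint_mul_Tnm_succ h]
      exact hmem n m
  have hmul : ∀ y ∈ P, x * y ∈ P := by
    rw [← StarSubalgebra.mem_toSubalgebra, StarAlgebra.adjoin_toSubalgebra] at hx
    induction hx using Algebra.adjoin_induction with
    | mem u hu =>
      obtain rfl | hu : u = T ∨ star u = T := by simpa using hu
      · exact hgen hself
      · obtain rfl : u = adjoint T := by rw [← hu, star_eq_adjoint, adjoint_adjoint]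
        exact hgen hadj
    | algebraMap r =>
      intro y hy
      rw [← Algebra.smul_def]
      exact P.smul_mem r hy
    | add u v _ _ hu hv =>
      intro y hy
      rw [add_mul]
      exact P.add_mem (hu y hy) (hv y hy)
    | mul u v _ _ hu hv =>
      intro y hy
      rw [mul_assoc]
      exact hu _ (hv y hy)
  simpa [Tnm] using hmul (Tnm T 0 0) (hmem 0 0)

/-- The generator `T` as an element of the Toeplitz algebra. -/
noncomputable def toeplitzGen (T : H →L[ℂ] H) : ToeplitzAlg T :=
  ⟨T, StarAlgebra.elemental.self_mem ℂ T⟩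

lemma apply_star_mul_mul_self_of_diagonal (h : adjoint T * T = 1) (ρ : ToeplitzAlg T →L[ℂ] ℂ)
    (hρ : ∀ (n m k l : ℕ) (hnm : Tnm T n m ∈ ToeplitzAlg T) (hkl : Tnm T k l ∈ ToeplitzAlg T),
      (m : ℤ) - (n : ℤ) = (l : ℤ) - (k : ℤ) → ρ ⟨Tnm T n m, hnm⟩ = ρ ⟨Tnm T k l, hkl⟩)
    (a : ToeplitzAlg T) : ρ (star (toeplitzGen T) * a * toeplitzGen T) = ρ a := by
  let C : Submodule ℂ (ToeplitzAlg T) := LinearMap.eqLocus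
    (ρ.toLinearMap ∘ₗ LinearMap.mulRight ℂ (toeplitzGen T) ∘ₗ
      LinearMap.mulLeft ℂ (star (toeplitzGen T))) ρ.toLinearMap
  have hC : IsClosed (C : Set (ToeplitzAlg T)) :=
    isClosed_eq (f := fun a => ρ (star (toeplitzGen T) * a * toeplitzGen T)) (by fun_prop)
      ρ.continuous
  have hcl : IsClosed ((↑) '' (C : Set (ToeplitzAlg T)) : Set (H →L[ℂ] H)) :=
    (StarAlgebra.elemental.isClosedEmbedding_coe ℂ T).isClosedMap _ hC
  have hspan : Submodule.span ℂ (Set.range fun p : ℕ × ℕ => Tnm T p.1 p.2) ≤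
      C.map (ToeplitzAlg T).subtype.toAlgHom.toLinearMap := by
    refine Submodule.span_le.2 ?_
    rintro _ ⟨⟨n, m⟩, rfl⟩
    refine ⟨⟨Tnm T n m, Tnm_mem_toeplitzAlg T n m⟩, ?_, rfl⟩
    obtain ⟨k, l, hkl, heq⟩ := exists_adjoint_mul_Tnm_mul_self h n m
    have hcomp : star (toeplitzGen T) * ⟨Tnm T n m, Tnm_mem_toeplitzAlg T n m⟩ * toeplitzGen T =
        ⟨Tnm T k l, Tnm_mem_toeplitzAlg T k l⟩ := Subtype.ext heq
    refine (congrArg ρ hcomp).trans ?_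
    exact hρ k l n m (Tnm_mem_toeplitzAlg T k l) _ hkl
  obtain ⟨b, hb, hba⟩ := closure_minimal
    (fun x hx => hspan (adjoin_subset_span_Tnm h hx)) hcl a.2
  exact Subtype.ext hba ▸ hb

end Shift

/-- a continuous linear functional `ρ` on `𝒯` vanishes on all compact operators
in `𝒯` iff `ρ(T_{n,m}) = ρ(T_{k,l})` whenever `m - n = l - k`. -/
theorem vanishes_on_compacts_iff {H : Type*} [NormedAddCommGroup H]
    [InnerProductSpace ℂ H] [CompleteSpace H] (e : HilbertBasis ℕ ℂ H) (T : H →L[ℂ] H)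
    (hT : ∀ n : ℕ, T (e n) = e (n + 1))
    (ρ : (ToeplitzAlg T) →L[ℂ] ℂ) :
    (∀ a : ToeplitzAlg T, IsCompactOperator (⇑(a : H →L[ℂ] H)) → ρ a = 0) ↔
    (∀ (n m k l : ℕ) (hnm : Tnm T n m ∈ ToeplitzAlg T) (hkl : Tnm T k l ∈ ToeplitzAlg T),
      (m : ℤ) - (n : ℤ) = (l : ℤ) - (k : ℤ) →
        ρ ⟨Tnm T n m, hnm⟩ = ρ ⟨Tnm T k l, hkl⟩) := by
  have h := adjoint_shift_mul_shift hT
  constructor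
  · intro hρ
    have hdiag (n m j : ℕ) : ρ ⟨Tnm T (n + j) (m + j), Tnm_mem_toeplitzAlg T _ _⟩ =
        ρ ⟨Tnm T n m, Tnm_mem_toeplitzAlg T _ _⟩ := by
      induction j with
      | zero => rfl
      | succ j ih =>
        rw [← ih, eq_comm, ← sub_eq_zero, ← map_sub]
        exact hρ _ (isCompactOperator_Tnm_sub_Tnm_succ hT (n + j) (m + j))
    intro n m k l hnm hkl hd
    rcases le_total n k with hle | hle
    · obtain ⟨j, rfl⟩ := Nat.exists_eq_add_of_le hle
      obtain rfl : l = m + j := by omega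
      exact (hdiag n m j).symm
    · obtain ⟨j, rfl⟩ := Nat.exists_eq_add_of_le hle
      obtain rfl : m = l + j := by omega
      exact hdiag k l j
  · intro hρ a ha
    set t := toeplitzGen T
    have hinv (k : ℕ) : ρ (star t ^ k * a * t ^ k) = ρ a := by
      induction k with
      | zero => simp
      | succ k ih =>
        rw [← ih, ← apply_star_mul_mul_self_of_diagonal h ρ hρ (star t ^ k * a * t ^ k),
          pow_succ', pow_succ]
        simp only [mul_assoc, t]
    have hlim : Tendsto (fun k => star t ^ k * a * t ^ k) atTop (𝓝 0) := by
      have hnorm := tendsto_zero_iff_norm_tendsto_zero.1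
        (tendsto_adjoint_shift_pow_mul_of_isCompactOperator hT ha)
      refine squeeze_zero_norm (fun k => ?_) hnorm
      have hpow : ‖T ^ k‖ ≤ 1 := by
        have hstar : adjoint T ^ k = star (T ^ k) := by rw [star_pow, star_eq_adjoint]
        rw [← norm_star, ← hstar]
        refine opNorm_le_bound _ zero_le_one fun x => ?_
        simpa using antitone_norm_adjoint_pow_apply h x (Nat.zero_le k)
      calc ‖star t ^ k * a * t ^ k‖ = ‖adjoint T ^ k * a * T ^ k‖ := rfl
        _ ≤ ‖adjoint T ^ k * a‖ * ‖T ^ k‖ := norm_mul_le _ _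
        _ ≤ ‖adjoint T ^ k * a‖ := mul_le_of_le_one_right (norm_nonneg _) hpow
    have hρlim := (ρ.continuous.tendsto 0).comp hlim
    simp only [Function.comp_def, hinv, map_zero] at hρlim
    exact tendsto_nhds_unique tendsto_const_nhds hρlim
end

section
/- There exists a continuous linear functional ε on 𝒯 of norm 1 which is a unital multiplicative star-homomorphism 𝒯 → ℂ and satisfies ε(T_{n,m}) = 1 for all n, m ∈ ℕ (in particular ε(T) = 1). -/
open Filter Topology

section ApproximateEigenvectors

variable {H : Type*} [NormedAddCommGroup H] [InnerProductSpace ℂ H] {v : ℕ → H}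

/-- The operators annihilating a sequence of unit vectors asymptotically form a closed set. -/
lemma isClosed_setOf_tendsto_apply_zero (hv : ∀ N, ‖v N‖ = 1) :
    IsClosed {D : H →L[ℂ] H | Tendsto (fun N => D (v N)) atTop (𝓝 0)} := by
  refine isClosed_of_closure_subset fun D hD => ?_
  rw [Set.mem_ofPred_eq, Metric.tendsto_atTop]
  intro δ hδ
  obtain ⟨D', hD', hDD'⟩ := Metric.mem_closure_iff.1 hD (δ / 2) (half_pos hδ)
  obtain ⟨M, hM⟩ := Metric.tendsto_atTop.1 hD' (δ / 2) (half_pos hδ)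
  refine ⟨M, fun N hN => ?_⟩
  have h₁ := hM N hN
  have h₂ : ‖(D - D') (v N)‖ ≤ ‖D - D'‖ := by
    simpa [hv N] using (D - D').le_opNorm (v N)
  rw [dist_zero_right] at h₁ ⊢
  rw [dist_eq_norm] at hDD'
  calc ‖D (v N)‖ = ‖(D - D') (v N) + D' (v N)‖ := by simp
    _ ≤ ‖(D - D') (v N)‖ + ‖D' (v N)‖ := norm_add_le _ _
    _ < δ := by linarith

/-- `(A, c)` is related when `v` is a sequence of approximate eigenvectors of `A` for `c`. -/
def IsApproxEigen (v : ℕ → H) (p : (H →L[ℂ] H) × ℂ) : Prop :=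
  Tendsto (fun N => (p.1 - p.2 • 1) (v N)) atTop (𝓝 0)

lemma isApproxEigen_algebraMap (z : ℂ) :
    IsApproxEigen v (algebraMap ℂ ((H →L[ℂ] H) × ℂ) z) := by
  simp [IsApproxEigen, Algebra.algebraMap_eq_smul_one]

lemma IsApproxEigen.add {p q : (H →L[ℂ] H) × ℂ} (hp : IsApproxEigen v p)
    (hq : IsApproxEigen v q) : IsApproxEigen v (p + q) := by
  have h := Tendsto.add hp hq
  rw [add_zero] at h
  refine h.congr fun N => ?_
  simp only [sub_apply, smul_apply, add_apply, Prod.fst_add, Prod.snd_add, add_smul,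
    one_apply_eq_self]
  abel

lemma IsApproxEigen.mul {p q : (H →L[ℂ] H) × ℂ} (hp : IsApproxEigen v p)
    (hq : IsApproxEigen v q) : IsApproxEigen v (p * q) := by
  have h := ((p.1.continuous.tendsto 0).comp hq).add (Tendsto.const_smul hp q.2)
  rw [map_zero, smul_zero, add_zero] at h
  refine h.congr fun N => ?_
  simp [smul_sub, smul_smul, mul_comm]

lemma isClosed_setOf_isApproxEigen (hv : ∀ N, ‖v N‖ = 1) :
    IsClosed {p : (H →L[ℂ] H) × ℂ | IsApproxEigen v p} :=
  (isClosed_setOf_tendsto_apply_zero hv).preimage (by fun_prop)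

variable [CompleteSpace H]

/-- The star-subalgebra of pairs `(A, c)` such that `v` is a sequence of approximate eigenvectors
of `A` for `c` and of `star A` for `star c`. -/
noncomputable def approxEigenStarSubalgebra (v : ℕ → H) : StarSubalgebra ℂ ((H →L[ℂ] H) × ℂ) where
  carrier := {p | IsApproxEigen v p ∧ IsApproxEigen v (star p)}
  mul_mem' ha hb := ⟨ha.1.mul hb.1, by rw [star_mul]; exact hb.2.mul ha.2⟩
  add_mem' ha hb := ⟨ha.1.add hb.1, by rw [star_add]; exact ha.2.add hb.2⟩
  algebraMap_mem' z := ⟨isApproxEigen_algebraMap z, by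
    rw [← algebraMap_star_comm]; exact isApproxEigen_algebraMap _⟩
  star_mem' ha := ⟨ha.2, by rw [star_star]; exact ha.1⟩

lemma isClosed_approxEigenStarSubalgebra (hv : ∀ N, ‖v N‖ = 1) :
    IsClosed (approxEigenStarSubalgebra v : Set ((H →L[ℂ] H) × ℂ)) :=
  (isClosed_setOf_isApproxEigen hv).inter
    ((isClosed_setOf_isApproxEigen hv).preimage continuous_star)

/-- The first projection on the pairs of operators and approximate eigenvalues. -/
noncomputable def approxEigenFst (v : ℕ → H) : approxEigenStarSubalgebra v →⋆ₐ[ℂ] (H →L[ℂ] H) :=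
  (StarAlgHom.fst ℂ (H →L[ℂ] H) ℂ).comp (approxEigenStarSubalgebra v).subtype

lemma approxEigenFst_injective (hv : ∀ N, ‖v N‖ = 1) :
    Function.Injective (approxEigenFst v) := by
  refine (injective_iff_map_eq_zero _).2 ?_
  rintro ⟨⟨A, c⟩, hA, _⟩ h0
  obtain rfl : A = 0 := h0
  have h := Tendsto.norm hA
  have hc : ‖c‖ = 0 := by simpa [norm_smul, hv] using h
  exact Subtype.ext (Prod.ext rfl (norm_eq_zero.1 hc))

lemma isClosed_range_approxEigenFst (hv : ∀ N, ‖v N‖ = 1) :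
    IsClosed ((approxEigenFst v).range : Set (H →L[ℂ] H)) := by
  have : IsClosed (approxEigenStarSubalgebra v : Set ((H →L[ℂ] H) × ℂ)) :=
    isClosed_approxEigenStarSubalgebra hv
  have : CompleteSpace (approxEigenStarSubalgebra v) := this.completeSpace_coe
  have hiso := NonUnitalStarAlgHom.isometry (approxEigenFst v) (approxEigenFst_injective hv)
  exact hiso.isClosedEmbedding.isClosed_range

/-- A common sequence of approximate eigenvectors of `T` and `star T` gives a character of the
C⋆-algebra generated by `T`. -/
lemma exists_starAlgHom_elemental {T : H →L[ℂ] H} {c : ℂ} (hv : ∀ N, ‖v N‖ = 1)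
    (hT : (T, c) ∈ approxEigenStarSubalgebra v) :
    ∃ φ : StarAlgebra.elemental ℂ T →⋆ₐ[ℂ] ℂ,
      φ ⟨T, StarAlgebra.elemental.self_mem ℂ T⟩ = c := by
  have hle : StarAlgebra.elemental ℂ T ≤ (approxEigenFst v).range :=
    StarAlgebra.elemental.le_of_mem (isClosed_range_approxEigenFst hv) ⟨⟨(T, c), hT⟩, rfl⟩
  let E := StarAlgEquiv.ofInjective (approxEigenFst v) (approxEigenFst_injective hv)
  let snd : approxEigenStarSubalgebra v →⋆ₐ[ℂ] ℂ :=
    (StarAlgHom.snd ℂ (H →L[ℂ] H) ℂ).comp (approxEigenStarSubalgebra v).subtype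
  refine ⟨(snd.comp (E.symm : _ →⋆ₐ[ℂ] _)).comp (StarSubalgebra.inclusion hle), ?_⟩
  have h : E.symm ⟨T, hle (StarAlgebra.elemental.self_mem ℂ T)⟩ = ⟨(T, c), hT⟩ := by
    rw [← E.symm_apply_apply ⟨(T, c), hT⟩]
    rfl
  exact congrArg snd h

end ApproximateEigenvectors

section Shift

variable {H : Type*} [NormedAddCommGroup H] [InnerProductSpace ℂ H] (e : HilbertBasis ℕ ℂ H)

/-- The normalized sum of the first `N + 1` basis vectors. -/
noncomputable def basisMean (N : ℕ) : H :=
  ((√(N + 1 : ℝ))⁻¹ : ℂ) • ∑ i ∈ Finset.range (N + 1), e i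

lemma norm_basisMean (N : ℕ) : ‖basisMean e N‖ = 1 := by
  have h : ‖∑ i ∈ Finset.range (N + 1), e i‖ ^ 2 = N + 1 := by
    have := e.orthonormal.inner_sum (fun _ => 1) (fun _ => 1) (Finset.range (N + 1))
    rw [← Complex.ofReal_inj]
    simpa [inner_self_eq_norm_sq_to_K] using this
  have hpos : (0 : ℝ) < N + 1 := by positivity
  rw [basisMean, norm_smul, ← h, Real.sqrt_sq (norm_nonneg _)]
  have : ‖∑ i ∈ Finset.range (N + 1), e i‖ ≠ 0 := fun h0 => by simp [h0] at h; linarith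
  simp [this]

variable {e} {T : H →L[ℂ] H}

lemma tendsto_shift_basisMean_sub (hT : ∀ n : ℕ, T (e n) = e (n + 1)) :
    Tendsto (fun N => T (basisMean e N) - basisMean e N) atTop (𝓝 0) := by
  have hlim : Tendsto (fun N : ℕ => (√(N + 1 : ℝ))⁻¹ * 2) atTop (𝓝 0) := by
    rw [← zero_mul (2 : ℝ)]
    refine Tendsto.mul_const _ (tendsto_inv_atTop_zero.comp (Real.tendsto_sqrt_atTop.comp ?_))
    exact tendsto_atTop_add_const_right _ _ tendsto_natCast_atTop_atTop
  refine squeeze_zero_norm (fun N => ?_) hlim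
  have h : T (basisMean e N) - basisMean e N
      = ((√(N + 1 : ℝ))⁻¹ : ℂ) • (e (N + 1) - e 0) := by
    rw [basisMean, map_smul, ← smul_sub, map_sum, ← Finset.sum_sub_distrib]
    simp only [hT]
    rw [Finset.sum_range_sub (fun i => e i)]
  rw [h, norm_smul]
  have h2 : ‖e (N + 1) - e 0‖ ≤ 2 := by
    refine (norm_sub_le _ _).trans ?_
    rw [e.orthonormal.1, e.orthonormal.1]
    norm_num
  have h3 : ‖((√(N + 1 : ℝ))⁻¹ : ℂ)‖ = (√(N + 1 : ℝ))⁻¹ := by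
    rw [norm_inv, Complex.norm_real, Real.norm_of_nonneg (Real.sqrt_nonneg _)]
  rw [h3]
  gcongr

variable [CompleteSpace H]

lemma star_shift_mul_shift (hT : ∀ n : ℕ, T (e n) = e (n + 1)) :
    star T * T = 1 := by
  refine ContinuousLinearMap.ext_on (s := Set.range e) ?_ ?_
  · exact Submodule.dense_iff_topologicalClosure_eq_top.2 e.dense_span
  · rintro _ ⟨n, rfl⟩
    refine e.repr.injective (lp.ext (funext fun m => ?_))
    rw [e.repr_apply_apply, e.repr_apply_apply]
    simp [ContinuousLinearMap.star_eq_adjoint, ContinuousLinearMap.adjoint_inner_right, hT,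
      orthonormal_iff_ite.1 e.orthonormal]

lemma shift_mem_approxEigenStarSubalgebra (hT : ∀ n : ℕ, T (e n) = e (n + 1)) :
    (T, (1 : ℂ)) ∈ approxEigenStarSubalgebra (basisMean e) := by
  have h := tendsto_shift_basisMean_sub hT
  refine ⟨by simpa [IsApproxEigen] using h, ?_⟩
  have h' := ((-star T).continuous.tendsto 0).comp h
  rw [map_zero] at h'
  refine h'.congr fun N => ?_
  have h1 : star T (T (basisMean e N)) = basisMean e N :=
    congrArg (· (basisMean e N)) (star_shift_mul_shift hT)
  simp [h1]

end Shift

/-- there is a norm-one continuous linear functional `ε` on `𝒯` which is a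
unital multiplicative star-homomorphism into `ℂ` with `ε(T_{n,m}) = 1` for all `n, m`. -/
theorem exists_counit {H : Type*} [NormedAddCommGroup H]
    [InnerProductSpace ℂ H] [CompleteSpace H] (e : HilbertBasis ℕ ℂ H) (T : H →L[ℂ] H)
    (hT : ∀ n : ℕ, T (e n) = e (n + 1)) :
    ∃ ε : (ToeplitzAlg T) →L[ℂ] ℂ, ‖ε‖ = 1 ∧ ε 1 = 1 ∧
      (∀ a b : ToeplitzAlg T, ε (a * b) = ε a * ε b) ∧
      (∀ a : ToeplitzAlg T, ε (star a) = star (ε a)) ∧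
      (∀ (n m : ℕ) (hnm : Tnm T n m ∈ ToeplitzAlg T), ε ⟨Tnm T n m, hnm⟩ = 1) := by
  obtain ⟨φ, hφ⟩ := exists_starAlgHom_elemental (norm_basisMean e)
    (shift_mem_approxEigenStarSubalgebra hT)
  have hbound : ∀ a : StarAlgebra.elemental ℂ T, ‖φ a‖ ≤ 1 * ‖a‖ := fun a => by
    rw [one_mul]
    exact NonUnitalStarAlgHom.norm_apply_le φ a
  let ε : StarAlgebra.elemental ℂ T →L[ℂ] ℂ :=
    LinearMap.mkContinuous φ.toAlgHom.toLinearMap 1 hbound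
  have hnontriv : Nontrivial H := ⟨e 0, 0, e.orthonormal.ne_zero 0⟩
  refine ⟨ε, le_antisymm (LinearMap.mkContinuous_norm_le _ zero_le_one _) ?_, map_one φ,
    map_mul φ, map_star φ, fun n m hnm => ?_⟩
  · have h := ε.le_opNorm 1
    have h1 : ε 1 = 1 := map_one φ
    have h2 : ‖(1 : StarAlgebra.elemental ℂ T)‖ = 1 := norm_one (α := H →L[ℂ] H)
    rwa [h1, h2, mul_one, norm_one] at h
  · let t : StarAlgebra.elemental ℂ T := ⟨T, StarAlgebra.elemental.self_mem ℂ T⟩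
    have h : (⟨Tnm T n m, hnm⟩ : StarAlgebra.elemental ℂ T) = t ^ n * star t ^ m :=
      Subtype.ext rfl
    change φ ⟨Tnm T n m, hnm⟩ = 1
    rw [h, map_mul, map_pow, map_pow, map_star, hφ]
    simp
end
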